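/- arXiv:cs/0206025 — 8 statements merged into one kernel-verified Lean document; each statement's English description precedes it below -/
import Mathlib

section
/- Let (X, ⊑) be a complete lattice and let M : X → [0,1] be a fuzzy sublattice of X. Then M is a fuzzy convex sublattice of X if and only if for all x, y ∈ X and all z with x ⊓ y ⊑ z ⊑ x ⊔ y one has M(z) ≥ M(x ⊓ y) ∧ M(x ⊔ y) and moreover M(x ⊓ y) ∧ M(x ⊔ y) = M(x) ∧ M(y), where ∧ denotes minimum in [0,1]. -/
/- The membership grade lattice `L = [0,1]`. -/
instance : Fact ((0:ℝ) ≤ 1) := ⟨zero_le_one⟩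

/-- A subset `S` of a lattice `X` is a closed interval iff it is empty or
of the form `[a, b] = {z : a ⊑ z ⊑ b}` for some `a b : X`. -/
def IsClosedInterval {X : Type*} [Lattice X] (S : Set X) : Prop :=
  S = ∅ ∨ ∃ a b : X, S = Set.Icc a b

/-- The `p`-cut of a fuzzy set `M : X → [0,1]` is `{x : M x ≥ p}`. -/
def cut {X : Type*} (M : X → unitInterval) (p : unitInterval) : Set X :=
  {x | p ≤ M x}

/-- A fuzzy set `M : X → [0,1]` is a fuzzy interval iff every `p`-cut
of `M` is a closed interval of `X`. -/
def IsFuzzyInterval {X : Type*} [Lattice X] (M : X → unitInterval) : Prop :=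
  ∀ p : unitInterval, IsClosedInterval (cut M p)

section

variable {X L : Type*} [Lattice X] [SemilatticeInf L]

/-- A convex sublattice of a lattice: a set that contains, with any two of its points `x` and `y`,
the interval `Set.uIcc x y = [x ⊓ y, x ⊔ y]`. The empty set is allowed. -/
def IsConvexSublattice (S : Set X) : Prop :=
  ∀ x ∈ S, ∀ y ∈ S, Set.uIcc x y ⊆ S

/-- A fuzzy convex sublattice: an `L`-valued fuzzy set all of whose cuts are convex sublattices.
The `p`-cut of `M` is encoded as the preimage of `Set.Ici p`. -/
def IsFuzzyConvexSublattice (M : X → L) : Prop :=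
  ∀ p : L, IsConvexSublattice (M ⁻¹' Set.Ici p)

-- `M x ⊓ M y` is the largest `p` whose cut contains both `x` and `y`, so only that cut matters.
theorem isFuzzyConvexSublattice_iff_inf_le {M : X → L} :
    IsFuzzyConvexSublattice M ↔ ∀ x y : X, ∀ z ∈ Set.uIcc x y, M x ⊓ M y ≤ M z :=
  ⟨fun h x y _ hz => h (M x ⊓ M y) x inf_le_left y inf_le_right hz,
    fun h _ x hx y hy z hz => (le_inf hx hy).trans (h x y z hz)⟩

theorem uIcc_inf_sup (x y : X) : Set.uIcc (x ⊓ y) (x ⊔ y) = Set.uIcc x y :=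
  Set.uIcc_of_le inf_le_sup

theorem IsFuzzyConvexSublattice.inf_inf_sup_le {M : X → L} (hM : IsFuzzyConvexSublattice M)
    {x y z : X} (hz : z ∈ Set.uIcc x y) : M (x ⊓ y) ⊓ M (x ⊔ y) ≤ M z :=
  isFuzzyConvexSublattice_iff_inf_le.1 hM (x ⊓ y) (x ⊔ y) z <| by rwa [uIcc_inf_sup]

theorem IsFuzzyConvexSublattice.inf_inf_sup_eq {M : X → L} (hM : IsFuzzyConvexSublattice M)
    (x y : X) : M (x ⊓ y) ⊓ M (x ⊔ y) = M x ⊓ M y := by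
  have inf_le := isFuzzyConvexSublattice_iff_inf_le.1 hM x y
  apply le_antisymm
  · exact le_inf (hM.inf_inf_sup_le Set.left_mem_uIcc) (hM.inf_inf_sup_le Set.right_mem_uIcc)
  · exact le_inf (inf_le _ (Set.left_mem_Icc.2 inf_le_sup))
      (inf_le _ (Set.right_mem_Icc.2 inf_le_sup))

theorem fuzzy_convex_sublattice_iff_general (M : X → L) :
    IsFuzzyConvexSublattice M ↔
      ∀ x y : X,
        (∀ z ∈ Set.uIcc x y, M (x ⊓ y) ⊓ M (x ⊔ y) ≤ M z) ∧
        M (x ⊓ y) ⊓ M (x ⊔ y) = M x ⊓ M y := by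
  refine ⟨fun hM x y => ⟨fun _ hz => hM.inf_inf_sup_le hz, hM.inf_inf_sup_eq x y⟩, fun h => ?_⟩
  refine isFuzzyConvexSublattice_iff_inf_le.2 fun x y z hz => ?_
  obtain ⟨inf_inf_sup_le, inf_inf_sup_eq⟩ := h x y
  calc
    M x ⊓ M y = M (x ⊓ y) ⊓ M (x ⊔ y) := inf_inf_sup_eq.symm
    _ ≤ M z := inf_inf_sup_le z hz

end

/-- Let `M` be a fuzzy sublattice. Then `M` is a fuzzy convex sublattice iff
for all `x y` and every `z ∈ [x ⊓ y, x ⊔ y]` one has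
`M z ≥ M (x ⊓ y) ∧ M (x ⊔ y)`, and moreover `M (x ⊓ y) ∧ M (x ⊔ y) = M x ∧ M y`. -/
theorem fuzzy_convex_sublattice_iff {X : Type*} [CompleteLattice X] (M : X → unitInterval)
    (hsub : ∀ p : unitInterval, ∀ x ∈ cut M p, ∀ y ∈ cut M p,
      x ⊓ y ∈ cut M p ∧ x ⊔ y ∈ cut M p) :
    (∀ p : unitInterval, ∀ x ∈ cut M p, ∀ y ∈ cut M p,
        Set.Icc (x ⊓ y) (x ⊔ y) ⊆ cut M p) ↔
    ∀ x y : X,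
      (∀ z ∈ Set.Icc (x ⊓ y) (x ⊔ y), min (M (x ⊓ y)) (M (x ⊔ y)) ≤ M z) ∧
      min (M (x ⊓ y)) (M (x ⊔ y)) = min (M x) (M y) :=
  fuzzy_convex_sublattice_iff_general M
end

section
/- Let (X, ⊑) be a complete lattice and let {M_i}_{i ∈ J} be an arbitrary family of fuzzy intervals of X. Then the pointwise infimum M, defined by M(x) = inf_{i ∈ J} M_i(x) for each x ∈ X, is a fuzzy interval of X. -/
theorem iInter_Icc_eq_Icc_iSup_iInf {X : Type*} [CompleteLattice X] {ι : Sort*} (a b : ι → X) :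
    ⋂ i, Set.Icc (a i) (b i) = Set.Icc (⨆ i, a i) (⨅ i, b i) := by
  simp only [← Set.Ici_inter_Iic, Set.iInter_inter_distrib, Set.Ici_iSup, Set.Iic_iInf]

theorem IsClosedInterval.iInter {X : Type*} [CompleteLattice X] {ι : Sort*} {S : ι → Set X}
    (hS : ∀ i, IsClosedInterval (S i)) : IsClosedInterval (⋂ i, S i) := by
  by_cases hempty : ∃ i, S i = ∅
  · obtain ⟨i, hi⟩ := hempty
    exact Or.inl (Set.subset_eq_empty (Set.iInter_subset S i) hi)
  · have hIcc : ∀ i, ∃ a b : X, S i = Set.Icc a b := fun i =>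
      (hS i).resolve_left (not_exists.mp hempty i)
    choose a b hab using hIcc
    refine Or.inr ⟨⨆ i, a i, ⨅ i, b i, ?_⟩
    rw [Set.iInter_congr hab, iInter_Icc_eq_Icc_iSup_iInf]

theorem iInf_of_fuzzy_intervals_general {X L : Type*} [CompleteLattice X] [CompleteLattice L]
    {J : Sort*} (M : J → X → L) (hM : ∀ i p, IsClosedInterval {x | p ≤ M i x}) :
    ∀ p, IsClosedInterval {x | p ≤ ⨅ i, M i x} := by
  intro p
  have cut_iInf : {x | p ≤ ⨅ i, M i x} = ⋂ i, {x | p ≤ M i x} := by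
    simp only [le_iInf_iff, Set.ofPred_forall]
  rw [cut_iInf]
  exact .iInter fun i => hM i p

/-- The pointwise infimum of an arbitrary family of fuzzy intervals is a fuzzy interval. -/
theorem iInf_of_fuzzy_intervals {X : Type*} [CompleteLattice X] {J : Type*}
    (M : J → X → unitInterval) (hM : ∀ i, IsFuzzyInterval (M i)) :
    IsFuzzyInterval (fun x => ⨅ i, M i x) :=
  iInf_of_fuzzy_intervals_general M hM
end

section
/- Let (X, ⊑) be a complete lattice and let M : X → [0,1] be a fuzzy convex sublattice of X. Suppose that for every p ∈ [0,1] with M_p nonempty one has M(⊓M_p) ≥ inf_{x ∈ M_p} M(x) and M(⊔M_p) ≥ inf_{x ∈ M_p} M(x). Then M is a fuzzy interval of X; in fact, for every p with M_p nonempty, M_p = [⊓M_p, ⊔M_p]. -/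
theorem ordConnected_of_Icc_inf_sup_subset {X : Type*} [Lattice X] {S : Set X}
    (hS : ∀ x ∈ S, ∀ y ∈ S, Set.Icc (x ⊓ y) (x ⊔ y) ⊆ S) : S.OrdConnected :=
  ⟨fun x hx y hy => (Set.Icc_subset_Icc inf_le_left le_sup_right).trans (hS x hx y hy)⟩

theorem eq_Icc_of_ordConnected_of_isLeast_of_isGreatest {X : Type*} [Preorder X] {S : Set X}
    {a b : X} (hS : S.OrdConnected) (ha : IsLeast S a) (hb : IsGreatest S b) :
    S = Set.Icc a b :=
  Set.Subset.antisymm (fun _ hx => ⟨ha.2 hx, hb.2 hx⟩) (hS.out ha.1 hb.1)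

-- `M ⁻¹' Set.Ici p` is the `p`-cut of `M` for an arbitrary grade lattice `L`;
-- for `L = [0,1]` it is `cut M p` by definitional unfolding.
theorem mem_preimage_Ici_of_iInf_le {X L : Type*} [CompleteLattice L] {M : X → L} {p : L} {a : X}
    (ha : (⨅ x ∈ M ⁻¹' Set.Ici p, M x) ≤ M a) : a ∈ M ⁻¹' Set.Ici p :=
  have le_iInf_grades : p ≤ ⨅ x ∈ M ⁻¹' Set.Ici p, M x := le_iInf₂ fun _ hx => hx
  le_iInf_grades.trans ha

theorem isFuzzyInterval_of_nonempty_cut_eq_Icc {X : Type*} [Lattice X] {M : X → unitInterval}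
    {a b : unitInterval → X} (hcut : ∀ p, (cut M p).Nonempty → cut M p = Set.Icc (a p) (b p)) :
    IsFuzzyInterval M := fun p =>
  (cut M p).eq_empty_or_nonempty.imp_right fun hp => ⟨a p, b p, hcut p hp⟩

theorem fuzzy_convex_sublattice_is_fuzzy_interval_general {X L : Type*} [Preorder X]
    [CompleteLattice L] {M : X → L} {p : L} {a b : X}
    (hconv : (M ⁻¹' Set.Ici p).OrdConnected)
    (ha : a ∈ lowerBounds (M ⁻¹' Set.Ici p)) (hb : b ∈ upperBounds (M ⁻¹' Set.Ici p))
    (hMa : (⨅ x ∈ M ⁻¹' Set.Ici p, M x) ≤ M a) (hMb : (⨅ x ∈ M ⁻¹' Set.Ici p, M x) ≤ M b) :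
    M ⁻¹' Set.Ici p = Set.Icc a b :=
  eq_Icc_of_ordConnected_of_isLeast_of_isGreatest hconv
    ⟨mem_preimage_Ici_of_iInf_le hMa, ha⟩ ⟨mem_preimage_Ici_of_iInf_le hMb, hb⟩

/-- A fuzzy convex sublattice `M` satisfying `M (⊓ M_p) ≥ ⨅_{x ∈ M_p} M x` and
`M (⊔ M_p) ≥ ⨅_{x ∈ M_p} M x` for every `p` with nonempty cut is a fuzzy interval,
and `M_p = [⊓ M_p, ⊔ M_p]` for every such `p`. -/
theorem fuzzy_convex_sublattice_is_fuzzy_interval {X : Type*} [CompleteLattice X]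
    (M : X → unitInterval)
    (hconv : ∀ p : unitInterval, ∀ x ∈ cut M p, ∀ y ∈ cut M p,
      Set.Icc (x ⊓ y) (x ⊔ y) ⊆ cut M p)
    (h : ∀ p : unitInterval, (cut M p).Nonempty →
      (⨅ x ∈ cut M p, M x) ≤ M (sInf (cut M p)) ∧
      (⨅ x ∈ cut M p, M x) ≤ M (sSup (cut M p))) :
    IsFuzzyInterval M ∧
    ∀ p : unitInterval, (cut M p).Nonempty →
      cut M p = Set.Icc (sInf (cut M p)) (sSup (cut M p)) := by
  have hcut : ∀ p, (cut M p).Nonempty → cut M p = Set.Icc (sInf (cut M p)) (sSup (cut M p)) :=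
    fun p hp => fuzzy_convex_sublattice_is_fuzzy_interval_general
      (ordConnected_of_Icc_inf_sup_subset (hconv p)) (isGLB_sInf _).1 (isLUB_sSup _).1
      (h p hp).1 (h p hp).2
  exact ⟨isFuzzyInterval_of_nonempty_cut_eq_Icc hcut, hcut⟩
end

section
/- Let (X, ⊑) be a complete lattice and let M : X → [0,1] be a fuzzy interval of X. Then M is a fuzzy convex sublattice of X, and for every p ∈ [0,1] with M_p nonempty one has M(⊓M_p) ≥ inf_{x ∈ M_p} M(x) and M(⊔M_p) ≥ inf_{x ∈ M_p} M(x). -/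
namespace IsClosedInterval

variable {X : Type*} [Lattice X] {S : Set X}

theorem exists_eq_Icc (hS : IsClosedInterval S) (hne : S.Nonempty) :
    ∃ a b : X, a ≤ b ∧ S = Set.Icc a b := by
  obtain ⟨a, b, rfl⟩ := hS.resolve_left hne.ne_empty
  exact ⟨a, b, Set.nonempty_Icc.mp hne, rfl⟩

theorem exists_isLeast (hS : IsClosedInterval S) (hne : S.Nonempty) : ∃ a, IsLeast S a := by
  obtain ⟨a, b, hab, rfl⟩ := hS.exists_eq_Icc hne
  exact ⟨a, isLeast_Icc hab⟩

theorem exists_isGreatest (hS : IsClosedInterval S) (hne : S.Nonempty) :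
    ∃ b, IsGreatest S b := by
  obtain ⟨a, b, hab, rfl⟩ := hS.exists_eq_Icc hne
  exact ⟨b, isGreatest_Icc hab⟩

theorem Icc_inf_sup_subset (hS : IsClosedInterval S) {x y : X} (hx : x ∈ S) (hy : y ∈ S) :
    Set.Icc (x ⊓ y) (x ⊔ y) ⊆ S := by
  obtain ⟨a, b, -, rfl⟩ := hS.exists_eq_Icc ⟨x, hx⟩
  exact Set.Icc_subset_Icc (le_inf hx.1 hy.1) (sup_le hx.2 hy.2)

end IsClosedInterval

theorem fuzzy_interval_is_fuzzy_convex_sublattice_general {X : Type*} [Lattice X]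
    (M : X → unitInterval) (hM : IsFuzzyInterval M) :
    (∀ p : unitInterval, ∀ x ∈ cut M p, ∀ y ∈ cut M p,
      Set.Icc (x ⊓ y) (x ⊔ y) ⊆ cut M p) ∧
    ∀ p : unitInterval, (cut M p).Nonempty →
      (∃ a, IsGLB (cut M p) a ∧ (⨅ x ∈ cut M p, M x) ≤ M a) ∧
      (∃ b, IsLUB (cut M p) b ∧ (⨅ x ∈ cut M p, M x) ≤ M b) := by
  refine ⟨fun p x hx y hy => (hM p).Icc_inf_sup_subset hx hy, fun p hne => ?_⟩
  obtain ⟨a, ha⟩ := (hM p).exists_isLeast hne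
  obtain ⟨b, hb⟩ := (hM p).exists_isGreatest hne
  exact ⟨⟨a, ha.isGLB, iInf₂_le a ha.1⟩, ⟨b, hb.isLUB, iInf₂_le b hb.1⟩⟩

/-- A fuzzy interval `M` is a fuzzy convex sublattice and satisfies
`M (⊓ M_p) ≥ ⨅_{x ∈ M_p} M x` and `M (⊔ M_p) ≥ ⨅_{x ∈ M_p} M x` for every `p`
with nonempty cut. -/
theorem fuzzy_interval_is_fuzzy_convex_sublattice {X : Type*} [CompleteLattice X]
    (M : X → unitInterval) (hM : IsFuzzyInterval M) :
    (∀ p : unitInterval, ∀ x ∈ cut M p, ∀ y ∈ cut M p,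
      Set.Icc (x ⊓ y) (x ⊔ y) ⊆ cut M p) ∧
    ∀ p : unitInterval, (cut M p).Nonempty →
      (⨅ x ∈ cut M p, M x) ≤ M (sInf (cut M p)) ∧
      (⨅ x ∈ cut M p, M x) ≤ M (sSup (cut M p)) := by
  refine (fuzzy_interval_is_fuzzy_convex_sublattice_general M hM).imp_right fun h p hne => ?_
  obtain ⟨⟨a, ha, hMa⟩, b, hb, hMb⟩ := h p hne
  exact ⟨ha.sInf_eq ▸ hMa, hb.sSup_eq ▸ hMb⟩
end

section
/- Let (X, ⊑) be a finite nonempty lattice (hence a complete lattice) and let M : X → [0,1] be a fuzzy set. Then M is a fuzzy convex sublattice of X if and only if M is a fuzzy interval of X. -/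
/-!
A nonempty convex sublattice `S` is directed upwards and downwards, so a minimal and a maximal
element of `S`, which exist when there are no infinite chains, are its least element `a` and its
greatest element `b`; convexity then gives `S = [a, b]`. As the fuzzy notions are conditions on
each cut separately, this settles the fuzzy case.
-/

section Preorder

variable {α : Type*} [Preorder α] {s : Set α}

theorem exists_isLeast_of_codirectedOn [WellFoundedLT α] (hs : DirectedOn (fun x y ↦ y ≤ x) s)
    (hne : s.Nonempty) : ∃ a, IsLeast s a :=
  (exists_minimal_of_wellFoundedLT (· ∈ s) hne).imp fun _ ↦ hs.minimal_iff_isLeast.mp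

theorem exists_isGreatest_of_directedOn [WellFoundedGT α] (hs : DirectedOn (· ≤ ·) s)
    (hne : s.Nonempty) : ∃ b, IsGreatest s b :=
  (exists_maximal_of_wellFoundedGT (· ∈ s) hne).imp fun _ ↦ hs.maximal_iff_isGreatest.mp

theorem eq_Icc_of_ordConnected {a b : α} (hs : s.OrdConnected) (ha : IsLeast s a)
    (hb : IsGreatest s b) : s = Set.Icc a b :=
  Set.Subset.antisymm (fun _ hx ↦ ⟨ha.2 hx, hb.2 hx⟩) (hs.out ha.1 hb.1)

end Preorder

section Lattice

variable {X : Type*} [Lattice X] {S : Set X}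

theorem forall_Icc_inf_sup_subset_iff :
    (∀ x ∈ S, ∀ y ∈ S, Set.Icc (x ⊓ y) (x ⊔ y) ⊆ S) ↔ IsSublattice S ∧ S.OrdConnected := by
  constructor
  · intro h
    have sup_mem : SupClosed S := fun x hx y hy ↦ h x hx y hy ⟨inf_le_sup, le_rfl⟩
    have inf_mem : InfClosed S := fun x hx y hy ↦ h x hx y hy ⟨le_rfl, inf_le_sup⟩
    exact ⟨⟨sup_mem, inf_mem⟩, ⟨fun x hx y hy ↦
      (Set.Icc_subset_Icc inf_le_left le_sup_right).trans (h x hx y hy)⟩⟩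
  · rintro ⟨hS, hconn⟩ x hx y hy
    exact hconn.out (hS.infClosed hx hy) (hS.supClosed hx hy)

theorem isSublattice_Icc (a b : X) : IsSublattice (Set.Icc a b) where
  supClosed _ hx _ hy := ⟨le_sup_of_le_left hx.1, sup_le hx.2 hy.2⟩
  infClosed _ hx _ hy := ⟨le_inf hx.1 hy.1, inf_le_of_left_le hx.2⟩

theorem IsClosedInterval.isSublattice (hS : IsClosedInterval S) : IsSublattice S := by
  obtain rfl | ⟨a, b, rfl⟩ := hS
  · exact isSublattice_empty
  · exact isSublattice_Icc a b

theorem IsClosedInterval.ordConnected (hS : IsClosedInterval S) : S.OrdConnected := by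
  obtain rfl | ⟨a, b, rfl⟩ := hS
  · exact Set.ordConnected_empty
  · exact Set.ordConnected_Icc

variable [WellFoundedLT X] [WellFoundedGT X]

theorem IsClosedInterval.of_isSublattice (hS : IsSublattice S) (hconn : S.OrdConnected) :
    IsClosedInterval S := by
  obtain hempty | hne := S.eq_empty_or_nonempty
  · exact .inl hempty
  · obtain ⟨a, ha⟩ := exists_isLeast_of_codirectedOn hS.infClosed.codirectedOn hne
    obtain ⟨b, hb⟩ := exists_isGreatest_of_directedOn hS.supClosed.directedOn hne
    exact .inr ⟨a, b, eq_Icc_of_ordConnected hconn ha hb⟩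

theorem isClosedInterval_iff_isSublattice_and_ordConnected :
    IsClosedInterval S ↔ IsSublattice S ∧ S.OrdConnected :=
  ⟨fun hS ↦ ⟨hS.isSublattice, hS.ordConnected⟩, fun hS ↦ .of_isSublattice hS.1 hS.2⟩

theorem fuzzy_convex_iff_fuzzy_interval_of_finite_general {L : Type*} [LE L] (M : X → L) :
    (∀ p : L, ∀ x ∈ {z | p ≤ M z}, ∀ y ∈ {z | p ≤ M z},
      Set.Icc (x ⊓ y) (x ⊔ y) ⊆ {z | p ≤ M z}) ↔
      ∀ p : L, IsClosedInterval {z | p ≤ M z} :=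
  forall_congr' fun _ ↦ forall_Icc_inf_sup_subset_iff.trans
    isClosedInterval_iff_isSublattice_and_ordConnected.symm

end Lattice

/-- In a finite nonempty lattice, a fuzzy set is a fuzzy convex sublattice iff it
is a fuzzy interval. -/
theorem fuzzy_convex_iff_fuzzy_interval_of_finite {X : Type*} [Lattice X]
    [Fintype X] [Nonempty X] (M : X → unitInterval) :
    (∀ p : unitInterval, ∀ x ∈ cut M p, ∀ y ∈ cut M p,
      Set.Icc (x ⊓ y) (x ⊔ y) ⊆ cut M p) ↔ IsFuzzyInterval M := by
  exact fuzzy_convex_iff_fuzzy_interval_of_finite_general M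
end

section
/- Let (X, ⊑) be a complete lattice, let M : X → [0,1] be a fuzzy interval of X, and let f, g : [0,1] → X be the endpoint functions of M (with f(p) = ⊓M_p, g(p) = ⊔M_p when M_p is nonempty and f(p) = ⊤, g(p) = ⊥ when M_p is empty). Then for every subset P ⊆ [0,1] one has ⊔_{p ∈ P} f(p) = f(⋁P) and ⊓_{p ∈ P} g(p) = g(⋁P), where ⋁P is the supremum of P in [0,1]. -/
/- The cut at `⋁ P` is the intersection of the cuts at `p ∈ P`. If one of these is empty, its lower
endpoint is already `⊤`. Otherwise they pairwise meet, because they are nested, so every lower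
endpoint lies below every upper endpoint. Hence the supremum of the lower endpoints belongs to all
the cuts and is the least element of their intersection. Upper endpoints are dual. -/

open Set

section CompleteLattice

variable {X : Type*} [CompleteLattice X] {s : Set X} {a : X}

theorem eq_sInf_of_nonempty_of_not_nonempty (hs : s.Nonempty → a = sInf s)
    (hs' : ¬s.Nonempty → a = ⊤) : a = sInf s := by
  rcases s.eq_empty_or_nonempty with rfl | hne
  · rw [hs' not_nonempty_empty, sInf_empty]
  · exact hs hne

theorem eq_sSup_of_nonempty_of_not_nonempty (hs : s.Nonempty → a = sSup s)
    (hs' : ¬s.Nonempty → a = ⊥) : a = sSup s :=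
  eq_sInf_of_nonempty_of_not_nonempty (X := Xᵒᵈ) hs hs'

end CompleteLattice

namespace IsClosedInterval

theorem dual {X : Type*} [Lattice X] {s : Set X} (hs : IsClosedInterval s) :
    IsClosedInterval (OrderDual.ofDual ⁻¹' s) := by
  rcases hs with rfl | ⟨a, b, rfl⟩
  · exact .inl preimage_empty
  · exact .inr ⟨OrderDual.toDual b, OrderDual.toDual a, Icc_toDual.symm⟩

variable {X : Type*} [CompleteLattice X] {ι : Sort*} {C : ι → Set X}

theorem eq_Icc_sInf_sSup {s : Set X} (hs : IsClosedInterval s) (hne : s.Nonempty) :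
    s = Icc (sInf s) (sSup s) := by
  rcases hs with rfl | ⟨a, b, rfl⟩
  · exact absurd hne not_nonempty_empty
  · have hab : a ≤ b := nonempty_Icc.mp hne
    rw [csInf_Icc hab, csSup_Icc hab]

theorem iSup_sInf_mem_iInter (hC : ∀ i, IsClosedInterval (C i))
    (hinter : ∀ i j, (C i ∩ C j).Nonempty) : ⨆ i, sInf (C i) ∈ ⋂ i, C i := by
  have sInf_le_sSup (i j : ι) : sInf (C i) ≤ sSup (C j) :=
    let ⟨_, hi, hj⟩ := hinter i j
    (sInf_le hi).trans (le_sSup hj)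
  refine mem_iInter.mpr fun j => ?_
  rw [(hC j).eq_Icc_sInf_sSup (hinter j j).left]
  exact ⟨le_iSup (fun i => sInf (C i)) j, iSup_le fun i => sInf_le_sSup i j⟩

theorem iSup_sInf_eq_sInf_iInter (hC : ∀ i, IsClosedInterval (C i))
    (hdir : Directed (· ⊇ ·) C) : ⨆ i, sInf (C i) = sInf (⋂ i, C i) := by
  refine le_antisymm (iSup_le fun i => sInf_le_sInf (iInter_subset C i)) ?_
  by_cases hne : ∀ i, (C i).Nonempty
  · have hinter (i j : ι) : (C i ∩ C j).Nonempty :=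
      let ⟨k, hki, hkj⟩ := hdir i j
      (hne k).mono (subset_inter hki hkj)
    exact sInf_le (iSup_sInf_mem_iInter hC hinter)
  · obtain ⟨i, hi⟩ := not_forall.mp hne
    have sInf_eq_top : sInf (C i) = ⊤ := by
      rw [not_nonempty_iff_eq_empty.mp hi, sInf_empty]
    exact le_top.trans (sInf_eq_top.ge.trans (le_iSup (fun i => sInf (C i)) i))

theorem iInf_sSup_eq_sSup_iInter (hC : ∀ i, IsClosedInterval (C i))
    (hdir : Directed (· ⊇ ·) C) : ⨅ i, sSup (C i) = sSup (⋂ i, C i) :=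
  iSup_sInf_eq_sInf_iInter (X := Xᵒᵈ) (fun i => (hC i).dual) hdir

end IsClosedInterval

section Cut

variable {X L : Type*} [Preorder L] {P : Set L} {p₀ : L}

theorem preimage_Ici_eq_iInter_of_isLUB (hp₀ : IsLUB P p₀) (M : X → L) :
    M ⁻¹' Ici p₀ = ⋂ p : P, M ⁻¹' Ici (p : L) := by
  ext x
  simp only [mem_preimage, mem_Ici, mem_iInter, Subtype.forall, isLUB_le_iff hp₀, mem_upperBounds]

theorem directed_preimage_Ici (hP : DirectedOn (· ≤ ·) P) (M : X → L) :
    Directed (· ⊇ ·) fun p : P => M ⁻¹' Ici (p : L) :=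
  Directed.mono_comp (g := fun p => M ⁻¹' Ici p) _
    (fun _ _ hpq => preimage_mono (Ici_subset_Ici.mpr hpq)) hP.directed_val

theorem endpoint_continuity_general [CompleteLattice X] {M : X → L}
    (hM : ∀ p ∈ P, IsClosedInterval (M ⁻¹' Ici p)) (hP : DirectedOn (· ≤ ·) P)
    (hp₀ : IsLUB P p₀) :
    (⨆ p ∈ P, sInf (M ⁻¹' Ici p)) = sInf (M ⁻¹' Ici p₀) ∧
      (⨅ p ∈ P, sSup (M ⁻¹' Ici p)) = sSup (M ⁻¹' Ici p₀) := by
  have hC (p : P) : IsClosedInterval (M ⁻¹' Ici (p : L)) := hM p p.2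
  have hdir := directed_preimage_Ici hP M
  rw [preimage_Ici_eq_iInter_of_isLUB hp₀ M, iSup_subtype', iInf_subtype']
  exact ⟨IsClosedInterval.iSup_sInf_eq_sInf_iInter hC hdir,
    IsClosedInterval.iInf_sSup_eq_sSup_iInter hC hdir⟩

end Cut

/-- The endpoint functions `f p = ⊓ M_p` (resp. `g p = ⊔ M_p`) of a fuzzy interval
`M`, with `f p = ⊤` and `g p = ⊥` on empty cuts, satisfy:
`⨆_{p ∈ P} f p = f (⋁ P)` and `⨅_{p ∈ P} g p = g (⋁ P)` for every `P ⊆ [0,1]`. -/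
theorem endpoint_continuity {X : Type*} [CompleteLattice X]
    (M : X → unitInterval) (hM : IsFuzzyInterval M) (f g : unitInterval → X)
    (hf1 : ∀ p, (cut M p).Nonempty → f p = sInf (cut M p))
    (hf2 : ∀ p, ¬(cut M p).Nonempty → f p = ⊤)
    (hg1 : ∀ p, (cut M p).Nonempty → g p = sSup (cut M p))
    (hg2 : ∀ p, ¬(cut M p).Nonempty → g p = ⊥) :
    ∀ P : Set unitInterval,
      (⨆ p ∈ P, f p) = f (sSup P) ∧ (⨅ p ∈ P, g p) = g (sSup P) := by
  intro P
  simp only [fun p => eq_sInf_of_nonempty_of_not_nonempty (hf1 p) (hf2 p),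
    fun p => eq_sSup_of_nonempty_of_not_nonempty (hg1 p) (hg2 p)]
  exact endpoint_continuity_general (fun p _ => hM p) (.of_linearOrder P) (isLUB_sSup P)
end

section
/- Let (X, ⊑) be a complete lattice which is completely distributive (i.e., for every x ∈ X and Y ⊆ X: x ⊔ (⊓_{y∈Y} y) = ⊓_{y∈Y}(x ⊔ y) and x ⊓ (⊔_{y∈Y} y) = ⊔_{y∈Y}(x ⊓ y)). Let P ⊆ [0,1] and let F, G : [0,1] → X be functions satisfying: p ≤ q implies F(q) ⊑ F(p) and G(q) ⊑ G(p), and ⊓_{p∈P} F(p) = F(⋁P), ⊓_{p∈P} G(p) = G(⋁P). Then ⊓_{p∈P} (F(p) ⊔ G(p)) = F(⋁P) ⊔ G(⋁P). -/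
section Coframe

variable {X ι : Type*} [Order.Coframe X]

/-- By the coframe law the right-hand side is the infimum of `F p ⊔ G q` over all pairs of points
of `P`, and `F p ⊔ G q` dominates `F r ⊔ G r` for any common upper bound `r ∈ P` of `p` and `q`. -/
theorem biInf_sup_of_antitoneOn [Preorder ι] {P : Set ι} (hP : DirectedOn (· ≤ ·) P)
    {F G : ι → X} (hF : AntitoneOn F P) (hG : AntitoneOn G P) :
    (⨅ p ∈ P, F p ⊔ G p) = (⨅ p ∈ P, F p) ⊔ ⨅ p ∈ P, G p := by
  have : IsDirectedOrder P := hP.isDirectedOrder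
  have hF' : Antitone (P.domRestrict F) := Set.antitoneOn_iff_antitone.mp hF
  have hG' : Antitone (P.domRestrict G) := Set.antitoneOn_iff_antitone.mp hG
  simpa only [iInf_subtype, Set.domRestrict_apply] using iInf_sup_of_antitone hF' hG'

theorem inf_of_sup_of_antitone_general [CompletePartialOrder ι] {P : Set ι}
    (hP : DirectedOn (· ≤ ·) P) {F G : ι → X} (hF : AntitoneOn F P)
    (hFP : (⨅ p ∈ P, F p) = F (sSup P)) (hG : AntitoneOn G P)
    (hGP : (⨅ p ∈ P, G p) = G (sSup P)) :
    (⨅ p ∈ P, F p ⊔ G p) = F (sSup P) ⊔ G (sSup P) := by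
  rw [biInf_sup_of_antitoneOn hP hF hG, hFP, hGP]

end Coframe

/-- In a completely distributive complete lattice: if `F, G : [0,1] → X` are
antitone with `⨅_{p ∈ P} F p = F (⋁ P)` and `⨅_{p ∈ P} G p = G (⋁ P)`, then
`⨅_{p ∈ P} (F p ⊔ G p) = F (⋁ P) ⊔ G (⋁ P)`. -/
theorem inf_of_sup_of_antitone {X : Type*} [CompleteLattice X]
    (hd1 : ∀ (x : X) (Y : Set X), x ⊔ sInf Y = ⨅ y ∈ Y, x ⊔ y)
    (hd2 : ∀ (x : X) (Y : Set X), x ⊓ sSup Y = ⨆ y ∈ Y, x ⊓ y)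
    (P : Set unitInterval) (F G : unitInterval → X)
    (hF : ∀ p q : unitInterval, p ≤ q → F q ≤ F p)
    (hFP : (⨅ p ∈ P, F p) = F (sSup P))
    (hG : ∀ p q : unitInterval, p ≤ q → G q ≤ G p)
    (hGP : (⨅ p ∈ P, G p) = G (sSup P)) :
    (⨅ p ∈ P, F p ⊔ G p) = F (sSup P) ⊔ G (sSup P) := by
  let _ : Order.Coframe X := .ofMinimalAxioms ⟨fun x Y => (hd1 x Y).ge⟩
  exact inf_of_sup_of_antitone_general (.of_linearOrder P)
    (fun _ _ _ _ => hF _ _) hFP (fun _ _ _ _ => hG _ _) hGP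
end

section
/- Let (X, ⊑) be a completely distributive complete lattice and let M, N : X → [0,1] be fuzzy intervals of X with endpoint functions f_M, g_M and f_N, g_N respectively. For p ∈ [0,1] set D_p(M,N) = [f_M(p) ⊓ f_N(p), g_M(p) ⊔ g_N(p)] (the smallest closed interval containing M_p and N_p). Then: (i) for p ≤ q, D_q(M,N) ⊆ D_p(M,N); (ii) for every P ⊆ [0,1], ⋂_{p∈P} D_p(M,N) = D_{⋁P}(M,N); (iii) D_0(M,N) = X. -/
/-!
The left endpoint of the cut at `⋁ P` is the join of the left endpoints of the cuts at `p ∈ P`: the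
cuts are nested, so when they are all nonempty this join lies between the endpoints of each of them,
hence in each of them. Right endpoints are the order dual. As the endpoint functions are monotone or
antitone on a chain of grades, meets commute with the joins involved, and joins with the meets, so
the endpoints of `D p` have the same limit property; this is where continuity of the lattice
operations along chains, a weak form of distributivity, is needed.
-/

open Set

theorem biInter_Icc_eq_Icc_biSup_biInf {X L : Type*} [CompleteLattice X] (P : Set L)
    (a b : L → X) : ⋂ p ∈ P, Icc (a p) (b p) = Icc (⨆ p ∈ P, a p) (⨅ p ∈ P, b p) := by
  simp only [← Ici_inter_Iic, iInter_inter_distrib, Ici_iSup₂, Iic_iInf₂]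

section MeetContinuous

/-- A complete lattice is meet-continuous if binary meets distribute over joins of chains. Order
theorists often quantify over directed sets instead. Join-continuity of `X` is expressed as
`MeetContinuous Xᵒᵈ`. -/
def MeetContinuous (X : Type*) [CompleteLattice X] : Prop :=
  ∀ (x : X) (C : Set X), IsChain (· ≤ ·) C → x ⊓ sSup C = ⨆ y ∈ C, x ⊓ y

variable {X L : Type*} [CompleteLattice X] [LinearOrder L] {f g : L → X}

theorem MeetContinuous.inf_biSup (hX : MeetContinuous X) (hf : Monotone f) (x : X) (P : Set L) :
    x ⊓ ⨆ p ∈ P, f p = ⨆ p ∈ P, x ⊓ f p := by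
  simpa only [sSup_image, iSup_image] using
    hX x (f '' P) (hf.isChain_image (isChain_of_trichotomous P))

theorem MeetContinuous.biSup_inf_biSup (hX : MeetContinuous X) (hf : Monotone f) (hg : Monotone g)
    (P : Set L) : (⨆ p ∈ P, f p) ⊓ ⨆ p ∈ P, g p = ⨆ p ∈ P, f p ⊓ g p := by
  apply le_antisymm
  · calc (⨆ p ∈ P, f p) ⊓ ⨆ q ∈ P, g q
        = ⨆ q ∈ P, ⨆ p ∈ P, g q ⊓ f p := by
          simp only [hX.inf_biSup hg, inf_comm _ (g _), hX.inf_biSup hf]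
      _ ≤ ⨆ p ∈ P, f p ⊓ g p := iSup₂_le fun q hq ↦ iSup₂_le fun p hp ↦ by
          rcases le_total p q with hpq | hqp
          · exact le_iSup₂_of_le q hq (le_inf (inf_le_of_right_le (hf hpq)) inf_le_left)
          · exact le_iSup₂_of_le p hp (le_inf inf_le_right (inf_le_of_left_le (hg hqp)))
  · exact le_inf (iSup₂_mono fun _ _ ↦ inf_le_left) (iSup₂_mono fun _ _ ↦ inf_le_right)

theorem MeetContinuous.biInf_sup_biInf (hX : MeetContinuous Xᵒᵈ) (hf : Antitone f)
    (hg : Antitone g) (P : Set L) : (⨅ p ∈ P, f p) ⊔ ⨅ p ∈ P, g p = ⨅ p ∈ P, f p ⊔ g p :=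
  hX.biSup_inf_biSup hf.dual_right hg.dual_right P

end MeetContinuous

section IsClosedInterval

variable {X : Type*}

theorem IsClosedInterval.dual_s17 [Lattice X] {S : Set X} (hS : IsClosedInterval S) :
    IsClosedInterval (OrderDual.ofDual ⁻¹' S) := by
  rcases hS with rfl | ⟨a, b, rfl⟩
  · exact Or.inl rfl
  · exact Or.inr ⟨OrderDual.toDual b, OrderDual.toDual a, Icc_toDual.symm⟩

theorem IsClosedInterval.eq_Icc_sInf_sSup_s17 [CompleteLattice X] {S : Set X}
    (hS : IsClosedInterval S) (hne : S.Nonempty) : S = Icc (sInf S) (sSup S) := by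
  rcases hS with rfl | ⟨a, b, rfl⟩
  · exact absurd hne not_nonempty_empty
  · have hab : a ≤ b := nonempty_Icc.mp hne
    rw [csInf_Icc hab, csSup_Icc hab]

end IsClosedInterval

section Endpoints

variable {X L : Type*} [CompleteLattice X]

/-- The left endpoint function `f_M` of a fuzzy set with grades in any preorder. The convention
`f_M p = ⊤` at an empty cut needs no separate case, since `sInf ∅ = ⊤`. -/
def lowerEndpoint [Preorder L] (M : X → L) (p : L) : X :=
  sInf (M ⁻¹' Ici p)

/-- The right endpoint function `g_M` of a fuzzy set with grades in any preorder. The convention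
`g_M p = ⊥` at an empty cut needs no separate case, since `sSup ∅ = ⊥`. -/
def upperEndpoint [Preorder L] (M : X → L) (p : L) : X :=
  sSup (M ⁻¹' Ici p)

theorem eq_lowerEndpoint [Preorder L] {M : X → L} {f : L → X}
    (hne : ∀ p, (M ⁻¹' Ici p).Nonempty → f p = sInf (M ⁻¹' Ici p))
    (hempty : ∀ p, ¬(M ⁻¹' Ici p).Nonempty → f p = ⊤) : f = lowerEndpoint M := by
  funext p
  by_cases h : (M ⁻¹' Ici p).Nonempty
  · exact hne p h
  · rw [hempty p h, lowerEndpoint, not_nonempty_iff_eq_empty.mp h, sInf_empty]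

theorem eq_upperEndpoint [Preorder L] {M : X → L} {g : L → X}
    (hne : ∀ p, (M ⁻¹' Ici p).Nonempty → g p = sSup (M ⁻¹' Ici p))
    (hempty : ∀ p, ¬(M ⁻¹' Ici p).Nonempty → g p = ⊥) : g = upperEndpoint M :=
  eq_lowerEndpoint (X := Xᵒᵈ) hne hempty

theorem lowerEndpoint_mono [Preorder L] (M : X → L) : Monotone (lowerEndpoint M) :=
  fun _ _ hpq ↦ sInf_le_sInf (preimage_mono (Ici_subset_Ici.mpr hpq))

theorem upperEndpoint_anti [Preorder L] (M : X → L) : Antitone (upperEndpoint M) :=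
  fun _ _ hpq ↦ sSup_le_sSup (preimage_mono (Ici_subset_Ici.mpr hpq))

theorem lowerEndpoint_bot [Preorder L] [OrderBot L] (M : X → L) : lowerEndpoint M ⊥ = ⊥ := by
  simp [lowerEndpoint]

theorem upperEndpoint_bot [Preorder L] [OrderBot L] (M : X → L) : upperEndpoint M ⊥ = ⊤ := by
  simp [upperEndpoint]

theorem lowerEndpoint_le_upperEndpoint [LinearOrder L] {M : X → L} {p q : L}
    (hp : (M ⁻¹' Ici p).Nonempty) (hq : (M ⁻¹' Ici q).Nonempty) :
    lowerEndpoint M p ≤ upperEndpoint M q := by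
  obtain ⟨y, hpy, hqy⟩ : (M ⁻¹' Ici p ∩ M ⁻¹' Ici q).Nonempty := by
    rcases le_total p q with hpq | hqp
    · exact hq.imp fun y hy ↦ ⟨hpq.trans hy, hy⟩
    · exact hp.imp fun y hy ↦ ⟨hy, hqp.trans hy⟩
  exact (sInf_le hpy).trans (le_sSup hqy)

theorem lowerEndpoint_sSup [CompleteLinearOrder L] {M : X → L}
    (hM : ∀ p, IsClosedInterval (M ⁻¹' Ici p)) (P : Set L) :
    lowerEndpoint M (sSup P) = ⨆ p ∈ P, lowerEndpoint M p := by
  refine le_antisymm ?_ (lowerEndpoint_mono M).le_map_sSup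
  by_cases hne : ∀ p ∈ P, (M ⁻¹' Ici p).Nonempty
  · suffices hmem : ∀ p ∈ P, (⨆ q ∈ P, lowerEndpoint M q) ∈ M ⁻¹' Ici p from
      sInf_le (mem_preimage.mpr (sSup_le hmem))
    intro p hp
    rw [(hM p).eq_Icc_sInf_sSup_s17 (hne p hp)]
    exact ⟨le_iSup₂ (f := fun q _ ↦ lowerEndpoint M q) p hp,
      iSup₂_le fun q hq ↦ lowerEndpoint_le_upperEndpoint (hne q hq) (hne p hp)⟩
  · push Not at hne
    obtain ⟨p, hp, hempty⟩ := hne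
    have htop : lowerEndpoint M p = ⊤ := by rw [lowerEndpoint, hempty, sInf_empty]
    exact le_iSup₂_of_le p hp (htop ▸ le_top)

theorem upperEndpoint_sSup [CompleteLinearOrder L] {M : X → L}
    (hM : ∀ p, IsClosedInterval (M ⁻¹' Ici p)) (P : Set L) :
    upperEndpoint M (sSup P) = ⨅ p ∈ P, upperEndpoint M p :=
  lowerEndpoint_sSup (X := Xᵒᵈ) (M := M ∘ OrderDual.ofDual) (fun p ↦ (hM p).dual_s17) P

end Endpoints

section CutHull

variable {X L : Type*} [CompleteLattice X]

/-- The paper's `D_p(M, N)`, the closed interval spanned by the `p`-cuts of `M` and `N`. -/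
def cutHull [Preorder L] (M N : X → L) (p : L) : Set X :=
  Icc (lowerEndpoint M p ⊓ lowerEndpoint N p) (upperEndpoint M p ⊔ upperEndpoint N p)

theorem cutHull_anti [Preorder L] (M N : X → L) : Antitone (cutHull M N) :=
  fun _ _ hpq ↦ Icc_subset_Icc
    (inf_le_inf (lowerEndpoint_mono M hpq) (lowerEndpoint_mono N hpq))
    (sup_le_sup (upperEndpoint_anti M hpq) (upperEndpoint_anti N hpq))

theorem cutHull_bot [Preorder L] [OrderBot L] (M N : X → L) : cutHull M N ⊥ = univ := by
  simp [cutHull, lowerEndpoint_bot, upperEndpoint_bot]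

theorem biInter_cutHull [CompleteLinearOrder L] (hmeet : MeetContinuous X)
    (hjoin : MeetContinuous Xᵒᵈ) {M N : X → L} (hM : ∀ p, IsClosedInterval (M ⁻¹' Ici p))
    (hN : ∀ p, IsClosedInterval (N ⁻¹' Ici p)) (P : Set L) :
    ⋂ p ∈ P, cutHull M N p = cutHull M N (sSup P) := by
  simp only [cutHull, biInter_Icc_eq_Icc_biSup_biInf, lowerEndpoint_sSup hM, lowerEndpoint_sSup hN,
    upperEndpoint_sSup hM, upperEndpoint_sSup hN,
    hmeet.biSup_inf_biSup (lowerEndpoint_mono M) (lowerEndpoint_mono N),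
    hjoin.biInf_sup_biInf (upperEndpoint_anti M) (upperEndpoint_anti N)]

theorem D_cut_properties_general [CompleteLinearOrder L] (hmeet : MeetContinuous X)
    (hjoin : MeetContinuous Xᵒᵈ) {M N : X → L} (hM : ∀ p, IsClosedInterval (M ⁻¹' Ici p))
    (hN : ∀ p, IsClosedInterval (N ⁻¹' Ici p)) :
    (∀ p q, p ≤ q → cutHull M N q ⊆ cutHull M N p) ∧
    (∀ P : Set L, ⋂ p ∈ P, cutHull M N p = cutHull M N (sSup P)) ∧
    cutHull M N ⊥ = univ :=
  ⟨fun _ _ hpq ↦ cutHull_anti M N hpq, biInter_cutHull hmeet hjoin hM hN, cutHull_bot M N⟩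

end CutHull

/-- For fuzzy intervals `M, N` of a completely distributive complete lattice, with
endpoint functions `fM, gM, fN, gN`, the sets
`D p = [fM p ⊓ fN p, gM p ⊔ gN p]` satisfy: (i) `p ≤ q → D q ⊆ D p`;
(ii) `⋂_{p ∈ P} D p = D (⋁ P)` for every `P ⊆ [0,1]`; (iii) `D 0 = X`. -/
theorem D_cut_properties {X : Type*} [CompleteLattice X]
    (hd1 : ∀ (x : X) (Y : Set X), x ⊔ sInf Y = ⨅ y ∈ Y, x ⊔ y)
    (hd2 : ∀ (x : X) (Y : Set X), x ⊓ sSup Y = ⨆ y ∈ Y, x ⊓ y)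
    (M N : X → unitInterval) (hM : IsFuzzyInterval M) (hN : IsFuzzyInterval N)
    (fM gM fN gN : unitInterval → X)
    (hfM1 : ∀ p, (cut M p).Nonempty → fM p = sInf (cut M p))
    (hfM2 : ∀ p, ¬(cut M p).Nonempty → fM p = ⊤)
    (hgM1 : ∀ p, (cut M p).Nonempty → gM p = sSup (cut M p))
    (hgM2 : ∀ p, ¬(cut M p).Nonempty → gM p = ⊥)
    (hfN1 : ∀ p, (cut N p).Nonempty → fN p = sInf (cut N p))
    (hfN2 : ∀ p, ¬(cut N p).Nonempty → fN p = ⊤)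
    (hgN1 : ∀ p, (cut N p).Nonempty → gN p = sSup (cut N p))
    (hgN2 : ∀ p, ¬(cut N p).Nonempty → gN p = ⊥) :
    (∀ p q : unitInterval, p ≤ q →
      Set.Icc (fM q ⊓ fN q) (gM q ⊔ gN q) ⊆ Set.Icc (fM p ⊓ fN p) (gM p ⊔ gN p)) ∧
    (∀ P : Set unitInterval,
      (⋂ p ∈ P, Set.Icc (fM p ⊓ fN p) (gM p ⊔ gN p)) =
        Set.Icc (fM (sSup P) ⊓ fN (sSup P)) (gM (sSup P) ⊔ gN (sSup P))) ∧
    Set.Icc (fM 0 ⊓ fN 0) (gM 0 ⊔ gN 0) = Set.univ := by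
  rw [eq_lowerEndpoint hfM1 hfM2, eq_lowerEndpoint hfN1 hfN2, eq_upperEndpoint hgM1 hgM2,
    eq_upperEndpoint hgN1 hgN2]
  exact D_cut_properties_general (fun x C _ ↦ hd2 x C) (fun x C _ ↦ hd1 x C) hM hN
end
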